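/- arXiv:1204.4967 — 2 statements merged into one kernel-verified Lean document; each statement's English description precedes it below -/
import Mathlib

section
/- Let R be a principal ideal domain with field of fractions K. Then every rational map φ of degree d ≥ 2 over K admits an R-minimal model, i.e., there exist (λ,A) ∈ K^× × GL₂(K) such that [F,G]^{(λ,A)} has coefficients in R and its resultant generates the ideal Res_R([φ]). -/
noncomputable section

/-- Determinant of the Sylvester matrix of two polynomials, given by coefficient
sequences `p` (regarded as having degree `m`) and `q` (regarded as having degree `n`). -/
def sylRes {K : Type*} [CommRing K] (m n : ℕ) (p q : ℕ → K) : K :=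
  Matrix.det (Matrix.of fun i j : Fin (n + m) =>
    if (i : ℕ) < n then
      (if (i : ℕ) ≤ (j : ℕ) ∧ (j : ℕ) ≤ (i : ℕ) + m then p (m - ((j : ℕ) - (i : ℕ))) else 0)
    else
      (if (i : ℕ) - n ≤ (j : ℕ) ∧ (j : ℕ) ≤ ((i : ℕ) - n) + n then
        q (n - ((j : ℕ) - ((i : ℕ) - n))) else 0))

/-- The binary form of degree `d` with coefficient sequence `f`
(`f i` is the coefficient of `X^i Y^(d-i)`). -/
def toForm {K : Type*} [CommRing K] (d : ℕ) (f : ℕ → K) : MvPolynomial (Fin 2) K :=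
  ∑ i ∈ Finset.range (d + 1),
    MvPolynomial.C (f i) * MvPolynomial.X 0 ^ i * MvPolynomial.X 1 ^ (d - i)

/-- Substitution `X ↦ A₀₀ X + A₀₁ Y`, `Y ↦ A₁₀ X + A₁₁ Y`. -/
def substMat {K : Type*} [CommRing K] (A : Matrix (Fin 2) (Fin 2) K)
    (P : MvPolynomial (Fin 2) K) : MvPolynomial (Fin 2) K :=
  MvPolynomial.eval₂ MvPolynomial.C
    (fun k => MvPolynomial.C (A k 0) * MvPolynomial.X 0 + MvPolynomial.C (A k 1) * MvPolynomial.X 1) P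

/-- Coefficient sequence of a binary form of degree `d`. -/
def coeffVec {K : Type*} [CommRing K] (d : ℕ) (P : MvPolynomial (Fin 2) K) : ℕ → K :=
  fun i => MvPolynomial.coeff (Finsupp.single (0 : Fin 2) i + Finsupp.single (1 : Fin 2) (d - i)) P

/-- Coefficients of `F_A = δ·(F∘A) − β·(G∘A)` for `A = [[α,β],[γ,δ]]`. -/
def FA {K : Type*} [CommRing K] (d : ℕ) (f g : ℕ → K) (A : Matrix (Fin 2) (Fin 2) K) : ℕ → K :=
  coeffVec d (MvPolynomial.C (A 1 1) * substMat A (toForm d f) -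
    MvPolynomial.C (A 0 1) * substMat A (toForm d g))

/-- Coefficients of `G_A = −γ·(F∘A) + α·(G∘A)` for `A = [[α,β],[γ,δ]]`. -/
def GA {K : Type*} [CommRing K] (d : ℕ) (f g : ℕ → K) (A : Matrix (Fin 2) (Fin 2) K) : ℕ → K :=
  coeffVec d (-(MvPolynomial.C (A 1 0)) * substMat A (toForm d f) +
    MvPolynomial.C (A 0 0) * substMat A (toForm d g))

/-- The ideal `Res_R([φ])`: generated by the resultants of all models over `R`
of the form `[F,G]^{(λ,A)}` with `(λ,A) ∈ K^× × GL₂(K)`. -/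
def ResIdeal (R : Type*) {K : Type*} [CommRing R] [Field K] [Algebra R K]
    (d : ℕ) (f g : ℕ → K) : Ideal R :=
  Ideal.span { r : R | ∃ (l : K) (A : Matrix (Fin 2) (Fin 2) K), l ≠ 0 ∧ A.det ≠ 0 ∧
    (∀ i, ∃ a : R, algebraMap R K a = l * FA d f g A i) ∧
    (∀ i, ∃ b : R, algebraMap R K b = l * GA d f g A i) ∧
    algebraMap R K r = sylRes d d (fun i => l * FA d f g A i) (fun i => l * GA d f g A i) }

/-- The ideal `Res_R([φ]₁)`: as `ResIdeal` but with `A` restricted to affine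
(upper-triangular) transformations. -/
def AffResIdeal (R : Type*) {K : Type*} [CommRing R] [Field K] [Algebra R K]
    (d : ℕ) (f g : ℕ → K) : Ideal R :=
  Ideal.span { r : R | ∃ (l : K) (A : Matrix (Fin 2) (Fin 2) K), l ≠ 0 ∧ A.det ≠ 0 ∧ A 1 0 = 0 ∧
    (∀ i, ∃ a : R, algebraMap R K a = l * FA d f g A i) ∧
    (∀ i, ∃ b : R, algebraMap R K b = l * GA d f g A i) ∧
    algebraMap R K r = sylRes d d (fun i => l * FA d f g A i) (fun i => l * GA d f g A i) }

/-!
Among the integral models of `φ`, choose one whose resultant `r` is minimal for divisibility. If `r`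
failed to divide the resultant of another integral model, then at some prime `v` the second model
would have the resultant of smaller order. The two models differ by some `(x, X)` in
`K^× × GL₂(K)`; scaling by a unit at `v` and substituting along a matrix invertible over the local
ring at `v` change neither the integrality of a model at `v` nor the order of its resultant there.
Hence only the class of `(x, X)` modulo such local units matters, and it has a representative
`(y, Y)` which is a local unit at all primes other than `v`: by the Smith normal form
`X = U * D * V`, it suffices to treat diagonal entries, for which a power of a generator of `v`
serves. Moving the first model along `(y, Y)` yields an integral model whose resultant agrees with
that of the second model at `v` and with `r` at all other primes, hence properly divides `r`.
-/

section LinearSubst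

open MvPolynomial

variable {ι σ τ υ R K : Type*} [CommRing R] [CommRing K]

/-- The linear substitution `X i ↦ ∑ j, A i j * X j` in polynomials. -/
def linearSubst [Fintype τ] (A : Matrix σ τ K) : MvPolynomial σ K →ₐ[K] MvPolynomial τ K :=
  bind₁ A.toMvPolynomial

lemma linearSubst_C [Fintype τ] (A : Matrix σ τ K) (c : K) : linearSubst A (C c) = C c :=
  bind₁_C_right _ c

lemma linearSubst_linearSubst [Fintype τ] [Fintype υ] (A : Matrix σ τ K) (B : Matrix τ υ K)
    (P : MvPolynomial σ K) : linearSubst B (linearSubst A P) = linearSubst (A * B) P := by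
  simp only [linearSubst, bind₁_bind₁, ← Matrix.toMvPolynomial_mul]

lemma linearSubst_one [Fintype σ] [DecidableEq σ] (P : MvPolynomial σ K) :
    linearSubst (1 : Matrix σ σ K) P = P := by
  simp only [linearSubst, Matrix.toMvPolynomial_one, bind₁_X_left, AlgHom.id_apply]

lemma isHomogeneous_linearSubst [Fintype τ] (A : Matrix σ τ K) {P : MvPolynomial σ K} {n : ℕ}
    (hP : P.IsHomogeneous n) : (linearSubst A P).IsHomogeneous n := by
  have h := hP.aeval A.toMvPolynomial A.toMvPolynomial_isHomogeneous
  rwa [one_mul] at h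

lemma linearSubst_map [Fintype τ] (φ : R →+* K) (A : Matrix σ τ R) (P : MvPolynomial σ R) :
    linearSubst (A.map φ) (map φ P) = map φ (linearSubst A P) := by
  have hφ : (A.map φ).toMvPolynomial = fun i => map φ (A.toMvPolynomial i) :=
    funext (Matrix.toMvPolynomial_map φ A)
  simp only [linearSubst, map_bind₁, hφ]

lemma substMat_eq_linearSubst (A : Matrix (Fin 2) (Fin 2) K) (P : MvPolynomial (Fin 2) K) :
    substMat A P = linearSubst A P := by
  have hvars : (fun k => C (A k 0) * X 0 + C (A k 1) * X 1) = A.toMvPolynomial := by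
    funext k
    simp only [Matrix.toMvPolynomial, Fin.sum_univ_two, C_mul_X_eq_monomial]
  rw [substMat, hvars]
  rfl

variable [Fintype ι] [DecidableEq ι]

/-- The action of `(l, A)` on tuples of forms: `M` is substituted along `A` and then multiplied by
`l` and the adjugate of `A`. For `M = ![F, G]` this is `[F, G]^{(l, A)}`, a model of the conjugate
`A⁻¹ ∘ φ ∘ A` of the map `φ` with model `M`. -/
def conjModel (l : K) (A : Matrix ι ι K) (M : ι → MvPolynomial ι K) : ι → MvPolynomial ι K :=
  fun a => ∑ b, C (l * A.adjugate a b) * linearSubst A (M b)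

lemma conjModel_one (l : K) (M : ι → MvPolynomial ι K) :
    conjModel l 1 M = fun a => C l * M a := by
  funext a
  simp [conjModel, linearSubst_one, Matrix.one_apply, apply_ite C]

lemma conjModel_conjModel (l m : K) (A B : Matrix ι ι K) (M : ι → MvPolynomial ι K) :
    conjModel m B (conjModel l A M) = conjModel (m * l) (A * B) M := by
  funext a
  simp only [conjModel, map_sum, map_mul, linearSubst_C, linearSubst_linearSubst,
    Matrix.adjugate_mul_distrib, Matrix.mul_apply, Finset.mul_sum, Finset.sum_mul]
  rw [Finset.sum_comm]
  refine Finset.sum_congr rfl fun b _ => Finset.sum_congr rfl fun c _ => ?_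
  ring

lemma isHomogeneous_conjModel (l : K) (A : Matrix ι ι K) {M : ι → MvPolynomial ι K} {d : ℕ}
    (hM : ∀ a, (M a).IsHomogeneous d) (a : ι) : (conjModel l A M a).IsHomogeneous d :=
  IsHomogeneous.sum _ _ _ fun b _ => (isHomogeneous_linearSubst A (hM b)).C_mul _

lemma conjModel_map (φ : R →+* K) (l : R) (A : Matrix ι ι R) (N : ι → MvPolynomial ι R) :
    conjModel (φ l) (A.map φ) (fun a => map φ (N a)) = fun a => map φ (conjModel l A N a) := by
  funext a
  have hadj : (A.map φ).adjugate = A.adjugate.map φ := (φ.map_adjugate A).symm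
  simp only [conjModel, hadj, linearSubst_map, Matrix.map_apply, map_sum, map_mul, map_C]

end LinearSubst

section BinaryForms

open MvPolynomial
open scoped Matrix

variable {R K : Type*} [CommRing R] [CommRing K]

/-- The monomial `X ^ (n - 1 - i) * Y ^ i`. For `i < n` these form the basis, ordered by decreasing
exponent of `X`, of the binary forms of degree `n - 1`; the space of such forms has dimension `n`,
which makes `n` the convenient index. -/
def formMonomial (K : Type*) [CommRing K] (n i : ℕ) : MvPolynomial (Fin 2) K :=
  X 0 ^ (n - 1 - i) * X 1 ^ i

/-- The coordinates of a polynomial with respect to the monomials `formMonomial K n j`. -/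
def formCoeff (n : ℕ) : MvPolynomial (Fin 2) K →ₗ[K] (Fin n → K) :=
  LinearMap.pi fun j => lcoeff K (.single 0 (n - 1 - j) + .single 1 (j : ℕ))

lemma formCoeff_apply (n : ℕ) (P : MvPolynomial (Fin 2) K) (j : Fin n) :
    formCoeff n P j = coeff (.single 0 (n - 1 - j) + .single 1 (j : ℕ)) P :=
  rfl

lemma formMonomial_eq_monomial (n i : ℕ) :
    formMonomial K n i = monomial (.single 0 (n - 1 - i) + .single 1 i) 1 := by
  simp only [formMonomial, X_pow_eq_monomial, monomial_mul, one_mul]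

lemma isHomogeneous_formMonomial {n i : ℕ} (hi : i < n) :
    (formMonomial K n i).IsHomogeneous (n - 1) := by
  have h := (isHomogeneous_X_pow (R := K) (0 : Fin 2) (n - 1 - i)).mul
    (isHomogeneous_X_pow (R := K) (1 : Fin 2) i)
  rwa [Nat.sub_add_cancel (by omega)] at h

lemma map_formMonomial (φ : R →+* K) (n i : ℕ) :
    map φ (formMonomial R n i) = formMonomial K n i := by
  simp only [formMonomial, map_mul, map_pow, map_X]

lemma formCoeff_map (φ : R →+* K) (n : ℕ) (P : MvPolynomial (Fin 2) R) (j : Fin n) :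
    formCoeff n (map φ P) j = φ (formCoeff n P j) :=
  coeff_map φ P _

lemma finTwo_exponent_zero (a b : ℕ) :
    (Finsupp.single 0 a + Finsupp.single 1 b : Fin 2 →₀ ℕ) 0 = a := by
  simp

lemma finTwo_exponent_one (a b : ℕ) :
    (Finsupp.single 0 a + Finsupp.single 1 b : Fin 2 →₀ ℕ) 1 = b := by
  simp

lemma finTwo_exponent_eq_iff {m : Fin 2 →₀ ℕ} {a b : ℕ} :
    Finsupp.single 0 a + Finsupp.single 1 b = m ↔ a = m 0 ∧ b = m 1 := by
  simp [Finsupp.ext_iff, Fin.forall_fin_two]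

lemma formCoeff_formMonomial (n : ℕ) (i : Fin n) :
    formCoeff n (formMonomial K n i) = Pi.single i 1 := by
  funext j
  have hexp : Finsupp.single (0 : Fin 2) (n - 1 - i) + Finsupp.single 1 (i : ℕ) =
      .single 0 (n - 1 - j) + .single 1 (j : ℕ) ↔ j = i := by
    rw [finTwo_exponent_eq_iff, finTwo_exponent_zero, finTwo_exponent_one, Fin.ext_iff]
    omega
  simp only [formCoeff_apply, formMonomial_eq_monomial, coeff_monomial, hexp, Pi.single_apply]

lemma sum_formCoeff_smul_formMonomial {n : ℕ} (hn : 0 < n) {P : MvPolynomial (Fin 2) K}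
    (hP : P.IsHomogeneous (n - 1)) : ∑ j, formCoeff n P j • formMonomial K n j = P := by
  ext m
  simp only [coeff_sum, coeff_smul, formMonomial_eq_monomial, coeff_monomial, smul_eq_mul,
    finTwo_exponent_eq_iff, mul_ite, mul_one, mul_zero]
  by_cases hm : m 0 + m 1 = n - 1
  · rw [Fintype.sum_eq_single ⟨m 1, by omega⟩ fun j hj => if_neg fun h => hj (Fin.ext h.2),
      if_pos ⟨by dsimp only; omega, rfl⟩, formCoeff_apply]
    congr 1
    rw [finTwo_exponent_eq_iff]
    dsimp only
    omega
  · rw [hP.coeff_eq_zero (by simpa [Finsupp.degree_eq_sum] using hm)]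
    exact Finset.sum_eq_zero fun j _ => if_neg (by omega)

/-- The matrix of the substitution `linearSubst A` on binary forms of degree `n - 1`, with the
coordinates of the images of the basis monomials as rows. -/
def symPow (n : ℕ) (A : Matrix (Fin 2) (Fin 2) K) : Matrix (Fin n) (Fin n) K :=
  .of fun i => formCoeff n (linearSubst A (formMonomial K n i))

lemma linearSubst_formMonomial {n : ℕ} (A : Matrix (Fin 2) (Fin 2) K) (i : Fin n) :
    linearSubst A (formMonomial K n i) = ∑ j, symPow n A i j • formMonomial K n j :=
  (sum_formCoeff_smul_formMonomial i.pos
    (isHomogeneous_linearSubst A (isHomogeneous_formMonomial i.isLt))).symm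

lemma formCoeff_linearSubst {n : ℕ} (A : Matrix (Fin 2) (Fin 2) K) {P : MvPolynomial (Fin 2) K}
    (hP : P.IsHomogeneous (n - 1)) :
    formCoeff n (linearSubst A P) = formCoeff n P ᵥ* symPow n A := by
  funext j
  conv_lhs => rw [← sum_formCoeff_smul_formMonomial j.pos hP]
  simp only [map_sum, map_smul, Finset.sum_apply, Pi.smul_apply, smul_eq_mul, Matrix.vecMul,
    dotProduct, symPow, Matrix.of_apply]

lemma symPow_mul (n : ℕ) (A B : Matrix (Fin 2) (Fin 2) K) :
    symPow n (A * B) = symPow n A * symPow n B := by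
  ext i j
  have h := congrFun (formCoeff_linearSubst B
    (isHomogeneous_linearSubst A (isHomogeneous_formMonomial (K := K) i.isLt))) j
  rwa [linearSubst_linearSubst] at h

lemma symPow_one (n : ℕ) : symPow n (1 : Matrix (Fin 2) (Fin 2) K) = 1 := by
  ext i j
  simp only [symPow, Matrix.of_apply, linearSubst_one, formCoeff_formMonomial, Matrix.one_apply,
    Pi.single_apply, eq_comm]

lemma symPow_map (φ : R →+* K) (n : ℕ) (A : Matrix (Fin 2) (Fin 2) R) :
    symPow n (A.map φ) = (symPow n A).map φ := by
  ext i j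
  simp only [symPow, Matrix.of_apply, Matrix.map_apply, ← map_formMonomial φ, linearSubst_map,
    formCoeff_map]

lemma isUnit_det_symPow (n : ℕ) {A : Matrix (Fin 2) (Fin 2) K} (hA : IsUnit A.det) :
    IsUnit (symPow n A).det := by
  apply Matrix.isUnit_det_of_right_inverse (B := symPow n A⁻¹)
  rw [← symPow_mul, Matrix.mul_nonsing_inv A hA, symPow_one]

end BinaryForms

section FormResultant

open MvPolynomial
open scoped Matrix Kronecker

variable {R K : Type*} [CommRing R] [CommRing K]

/-- The resultant of a pair of binary forms of degree `d`. -/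
def formResultant (d : ℕ) (M : Fin 2 → MvPolynomial (Fin 2) K) : K :=
  sylRes d d (coeffVec d (M 0)) (coeffVec d (M 1))

/-- The enumeration of `Fin 2 × Fin d` in which the pairs with first component `0` come first. -/
def sylvesterIndexEquiv (d : ℕ) : Fin 2 × Fin d ≃ Fin (d + d) :=
  finProdFinEquiv.trans (finCongr (two_mul d))

/-- The Sylvester matrix of a pair of binary forms of degree `d`. The row `(a, i)` holds the
coordinates of the multiple of `M a` by the `i`-th monomial of degree `d - 1`. -/
def sylvesterMatrix (d : ℕ) (M : Fin 2 → MvPolynomial (Fin 2) K) :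
    Matrix (Fin 2 × Fin d) (Fin 2 × Fin d) K :=
  .of fun i j => formCoeff (d + d) (formMonomial K d i.2 * M i.1) (sylvesterIndexEquiv d j)

lemma sylvesterIndexEquiv_zero (d : ℕ) (i : Fin d) : (sylvesterIndexEquiv d (0, i) : ℕ) = i := by
  simp [sylvesterIndexEquiv]

lemma sylvesterIndexEquiv_one (d : ℕ) (i : Fin d) : (sylvesterIndexEquiv d (1, i) : ℕ) = i + d := by
  simp [sylvesterIndexEquiv]

lemma finTwo_exponent_le_iff {m : Fin 2 →₀ ℕ} {a b : ℕ} :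
    Finsupp.single 0 a + Finsupp.single 1 b ≤ m ↔ a ≤ m 0 ∧ b ≤ m 1 := by
  simp [Finsupp.le_def, Fin.forall_fin_two]

lemma formCoeff_formMonomial_mul {d i : ℕ} (hi : i < d) (P : MvPolynomial (Fin 2) K)
    (j : Fin (d + d)) : formCoeff (d + d) (formMonomial K d i * P) j =
      if i ≤ j ∧ (j : ℕ) ≤ i + d then coeffVec d P (d - (j - i)) else 0 := by
  rw [formCoeff_apply, formMonomial_eq_monomial, coeff_monomial_mul', one_mul]
  refine if_ctx_congr ?_ (fun hij => ?_) fun _ => rfl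
  · rw [finTwo_exponent_le_iff, finTwo_exponent_zero, finTwo_exponent_one]
    omega
  · rw [coeffVec]
    congr 1
    refine (finTwo_exponent_eq_iff.mpr ?_).symm
    simp only [Finsupp.tsub_apply, finTwo_exponent_zero, finTwo_exponent_one]
    omega

lemma formResultant_eq_det_sylvesterMatrix (d : ℕ) (M : Fin 2 → MvPolynomial (Fin 2) K) :
    formResultant d M = (sylvesterMatrix d M).det := by
  rw [formResultant, sylRes, ← Matrix.det_submatrix_equiv_self (sylvesterIndexEquiv d)]
  congr 1
  ext ⟨a, i⟩ j
  simp only [Matrix.submatrix_apply, Matrix.of_apply, sylvesterMatrix,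
    formCoeff_formMonomial_mul i.isLt]
  fin_cases a
  · simp only [Fin.zero_eta, sylvesterIndexEquiv_zero, if_pos i.isLt]
  · simp only [Fin.mk_one, sylvesterIndexEquiv_one, Nat.add_sub_cancel]
    rw [if_neg (by omega)]

lemma sylvesterMatrix_linearSubst (d : ℕ) (A : Matrix (Fin 2) (Fin 2) K)
    {M : Fin 2 → MvPolynomial (Fin 2) K} (hM : ∀ a, (M a).IsHomogeneous d) :
    (1 : Matrix (Fin 2) (Fin 2) K) ⊗ₖ symPow d A *
        sylvesterMatrix d (fun a => linearSubst A (M a)) =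
      sylvesterMatrix d M *
        (symPow (d + d) A).submatrix (sylvesterIndexEquiv d) (sylvesterIndexEquiv d) := by
  ext ⟨a, i⟩ j
  have hrow : (formMonomial K d i * M a).IsHomogeneous (d + d - 1) := by
    have h := (isHomogeneous_formMonomial (K := K) i.isLt).mul (hM a)
    rwa [← Nat.sub_add_comm i.pos] at h
  trans formCoeff (d + d) (linearSubst A (formMonomial K d i * M a)) (sylvesterIndexEquiv d j)
  · simp only [map_mul, linearSubst_formMonomial, Finset.sum_mul, smul_mul_assoc, map_sum,
      map_smul, Finset.sum_apply, Pi.smul_apply, smul_eq_mul, sylvesterMatrix, Matrix.of_apply,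
      Matrix.mul_apply, Fintype.sum_prod_type, Matrix.kroneckerMap_apply, Matrix.one_apply,
      ite_mul, one_mul, zero_mul, Finset.sum_ite_irrel, Finset.sum_const_zero, Finset.sum_ite_eq,
      Finset.mem_univ, if_true]
  · rw [formCoeff_linearSubst A hrow, Matrix.mul_apply]
    exact (Equiv.sum_comp (sylvesterIndexEquiv d) _).symm

lemma sylvesterMatrix_linearCombination (d : ℕ) (B : Matrix (Fin 2) (Fin 2) K)
    (M : Fin 2 → MvPolynomial (Fin 2) K) :
    sylvesterMatrix d (fun a => ∑ b, C (B a b) * M b) =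
      B ⊗ₖ (1 : Matrix (Fin d) (Fin d) K) * sylvesterMatrix d M := by
  ext ⟨a, i⟩ j
  simp only [sylvesterMatrix, Matrix.mul_apply, Fintype.sum_prod_type, Matrix.kroneckerMap_apply,
    Matrix.one_apply, Matrix.of_apply, mul_ite, mul_one, mul_zero, ite_mul, zero_mul,
    Finset.sum_ite_eq, Finset.mem_univ, if_true, Finset.mul_sum, C_mul', mul_smul_comm,
    map_sum, map_smul, Finset.sum_apply, Pi.smul_apply, smul_eq_mul]

lemma sylvesterMatrix_conjModel {d : ℕ} (l : K) (A : Matrix (Fin 2) (Fin 2) K)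
    {M : Fin 2 → MvPolynomial (Fin 2) K} (hM : ∀ a, (M a).IsHomogeneous d) :
    (1 : Matrix (Fin 2) (Fin 2) K) ⊗ₖ symPow d A * sylvesterMatrix d (conjModel l A M) =
      (l • A.adjugate) ⊗ₖ (1 : Matrix (Fin d) (Fin d) K) * (sylvesterMatrix d M *
        (symPow (d + d) A).submatrix (sylvesterIndexEquiv d) (sylvesterIndexEquiv d)) := by
  have hconj : conjModel l A M = fun a => ∑ b, C ((l • A.adjugate) a b) * linearSubst A (M b) :=
    rfl
  rw [hconj, sylvesterMatrix_linearCombination, ← sylvesterMatrix_linearSubst d A hM,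
    ← Matrix.mul_assoc, ← Matrix.mul_assoc, ← Matrix.mul_kronecker_mul, ← Matrix.mul_kronecker_mul]
  simp only [Matrix.one_mul, Matrix.mul_one]

lemma formResultant_conjModel {d : ℕ} (l : K) (A : Matrix (Fin 2) (Fin 2) K)
    {M : Fin 2 → MvPolynomial (Fin 2) K} (hM : ∀ a, (M a).IsHomogeneous d) :
    (symPow d A).det ^ 2 * formResultant d (conjModel l A M) =
      (l ^ 2 * A.det) ^ d * (formResultant d M * (symPow (d + d) A).det) := by
  have hdet := congrArg Matrix.det (sylvesterMatrix_conjModel l A hM)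
  simpa only [Matrix.det_mul, Matrix.det_kronecker, Matrix.det_submatrix_equiv_self,
    Matrix.det_one, one_pow, one_mul, mul_one, Fintype.card_fin, Matrix.det_smul,
    Matrix.det_adjugate, Nat.add_one_sub_one, pow_one, ← formResultant_eq_det_sylvesterMatrix]
    using hdet

lemma formResultant_map (φ : R →+* K) (d : ℕ) (N : Fin 2 → MvPolynomial (Fin 2) R) :
    formResultant d (fun a => map φ (N a)) = φ (formResultant d N) := by
  simp only [formResultant_eq_det_sylvesterMatrix, RingHom.map_det]
  congr 1
  ext i j
  simp only [sylvesterMatrix, Matrix.of_apply, RingHom.mapMatrix_apply, Matrix.map_apply,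
    ← map_formMonomial φ, ← map_mul, formCoeff_map]

end FormResultant

section IntegralModels

open MvPolynomial
open scoped MatrixGroups

variable {ι K : Type*}

/-- A tuple of polynomials is integral over a subring `S` if its coefficients lie in `S`. -/
def IsIntegralModel [CommRing K] (S : Subring K) (M : ι → MvPolynomial ι K) : Prop :=
  ∀ a m, coeff m (M a) ∈ S

/-- The image of `GL n S` in `GL n K`. -/
def integralGL [CommRing K] (S : Subring K) (n : Type*) [Fintype n] [DecidableEq n] :
    Subgroup (GL n K) :=
  (Matrix.GeneralLinearGroup.map S.subtype).range

section CommRing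

variable [CommRing K] {S T : Subring K}

lemma isIntegralModel_iff_exists_map {M : ι → MvPolynomial ι K} :
    IsIntegralModel S M ↔ ∃ N : ι → MvPolynomial ι S, M = fun a => map S.subtype (N a) := by
  constructor
  · intro hM
    have hlift (a : ι) : M a ∈ Set.range (map (σ := ι) S.subtype) := by
      rw [mem_range_map_iff_coeffs_subset]
      intro c hc
      obtain ⟨m, -, rfl⟩ := mem_coeffs_iff.mp hc
      exact ⟨⟨_, hM a m⟩, rfl⟩
    choose N hN using hlift
    exact ⟨N, funext fun a => (hN a).symm⟩
  · rintro ⟨N, rfl⟩ a m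
    rw [coeff_map]
    exact (coeff m (N a)).2

lemma integralGL_mono (hST : S ≤ T) (n : Type*) [Fintype n] [DecidableEq n] :
    integralGL S n ≤ integralGL T n := by
  rintro _ ⟨A, rfl⟩
  exact ⟨Matrix.GeneralLinearGroup.map (Subring.inclusion hST) A, rfl⟩

lemma map_mem_integralGL {R n : Type*} [CommRing R] [Fintype n] [DecidableEq n] (φ : R →+* K)
    (A : GL n R) : Matrix.GeneralLinearGroup.map φ A ∈ integralGL φ.range n :=
  ⟨Matrix.GeneralLinearGroup.map φ.rangeRestrict A, rfl⟩

lemma IsIntegralModel.conjModel [Fintype ι] [DecidableEq ι] {M : ι → MvPolynomial ι K}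
    (hM : IsIntegralModel S M) {l : K} (hl : l ∈ S) {A : GL ι K} (hA : A ∈ integralGL S ι) :
    IsIntegralModel S (conjModel l A M) := by
  obtain ⟨N, rfl⟩ := isIntegralModel_iff_exists_map.mp hM
  obtain ⟨B, rfl⟩ := hA
  exact isIntegralModel_iff_exists_map.mpr
    ⟨_, conjModel_map S.subtype ⟨l, hl⟩ (B : Matrix ι ι S) N⟩

lemma IsIntegralModel.formResultant_mem {M : Fin 2 → MvPolynomial (Fin 2) K}
    (hM : IsIntegralModel S M) (d : ℕ) : formResultant d M ∈ S := by
  obtain ⟨N, rfl⟩ := isIntegralModel_iff_exists_map.mp hM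
  rw [formResultant_map]
  exact (formResultant d N).2

lemma isIntegralModel_iff_coeffVec {d : ℕ} {M : Fin 2 → MvPolynomial (Fin 2) K}
    (hM : ∀ a, (M a).IsHomogeneous d) :
    IsIntegralModel S M ↔ ∀ a i, coeffVec d (M a) i ∈ S := by
  refine ⟨fun h a i => h a _, fun h a m => ?_⟩
  by_cases hm : m 0 + m 1 = d
  · have hexp : Finsupp.single 0 (m 0) + Finsupp.single 1 (d - m 0) = m :=
      finTwo_exponent_eq_iff.mpr ⟨rfl, by omega⟩
    simpa only [coeffVec, hexp] using h a (m 0)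
  · rw [(hM a).coeff_eq_zero (by simpa [Finsupp.degree_eq_sum] using hm)]
    exact zero_mem S

end CommRing

section Field

variable [Field K]

lemma exists_isIntegralModel_conjModel [Fintype ι] [DecidableEq ι] (R : Type*) [CommRing R]
    [Algebra R K] [IsFractionRing R K] (M : ι → MvPolynomial ι K) :
    ∃ l : Kˣ, IsIntegralModel (algebraMap R K).range (conjModel (l : K) 1 M) := by
  classical
  obtain ⟨c, hc⟩ := IsLocalization.exist_integer_multiples_of_finset (nonZeroDivisors R)
    (Finset.univ.biUnion fun a => (M a).coeffs)
  have hc0 : algebraMap R K c ≠ 0 := (IsLocalization.map_units K c).ne_zero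
  refine ⟨Units.mk0 _ hc0, fun a m => ?_⟩
  rw [Units.val_mk0, conjModel_one, coeff_C_mul]
  by_cases hm : coeff m (M a) = 0
  · rw [hm, mul_zero]
    exact zero_mem _
  · rw [← Algebra.smul_def]
    exact hc _ (Finset.mem_biUnion.mpr
      ⟨a, Finset.mem_univ a, coeff_mem_coeffs m hm⟩)

variable {Γ₀ : Type*} [LinearOrderedCommGroupWithZero Γ₀] (v : Valuation K Γ₀)

lemma valuation_formResultant_conjModel {d : ℕ} {l : K} (hl : v l = 1) {A : GL (Fin 2) K}
    (hA : A ∈ integralGL v.integer (Fin 2)) {M : Fin 2 → MvPolynomial (Fin 2) K}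
    (hM : ∀ a, (M a).IsHomogeneous d) :
    v (formResultant d (conjModel l A M)) = v (formResultant d M) := by
  obtain ⟨B, rfl⟩ := hA
  have hdet : v (Matrix.GeneralLinearGroup.map v.integer.subtype B).val.det = 1 := by
    rw [← Matrix.GeneralLinearGroup.val_det_apply, Matrix.GeneralLinearGroup.map_det]
    exact (Valuation.integer.integers v).valuation_unit B.det
  have hsymPow (n : ℕ) :
      v (symPow n (Matrix.GeneralLinearGroup.map v.integer.subtype B).val).det = 1 := by
    have h := isUnit_det_symPow n ((Matrix.isUnit_iff_isUnit_det _).mp B.isUnit)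
    rw [← (Valuation.integer.integers v).one_of_isUnit h]
    change v (symPow n (B.val.map v.integer.subtype)).det = v (v.integer.subtype _)
    rw [symPow_map, RingHom.map_det, RingHom.mapMatrix_apply]
  have h := congrArg v (formResultant_conjModel l
    (Matrix.GeneralLinearGroup.map v.integer.subtype B).val hM)
  simpa only [map_mul, map_pow, hl, hdet, hsymPow, one_pow, one_mul, mul_one] using h

end Field

end IntegralModels

section SmithNormalForm

open scoped MatrixGroups

variable {n R K : Type*} [Fintype n] [DecidableEq n]

/-- The embedding of the diagonal torus into `GL n K`. -/
def diagonalGL [CommRing K] : (n → Kˣ) →* GL n K :=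
  (Units.map (Matrix.diagonalRingHom n K).toMonoidHom).comp MulEquiv.piUnits.symm.toMonoidHom

lemma coe_diagonalGL [CommRing K] (D : n → Kˣ) :
    (diagonalGL D : Matrix n n K) = Matrix.diagonal fun i => (D i : K) :=
  rfl

lemma diagonalGL_mem_integralGL [CommRing K] {S : Subring K} {D : n → Kˣ}
    (hD : ∀ i, ∃ u : Sˣ, S.subtype u = D i) : diagonalGL D ∈ integralGL S n := by
  choose u hu using hD
  refine ⟨diagonalGL u, ?_⟩
  ext i j
  rw [Matrix.GeneralLinearGroup.map_apply, coe_diagonalGL, coe_diagonalGL, Matrix.diagonal_apply,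
    Matrix.diagonal_apply, apply_ite S.subtype, hu, map_zero]

variable [CommRing R] [IsDomain R] [IsPrincipalIdealRing R]

lemma exists_eq_mul_diagonal_mul {A : Matrix n n R} (hA : A.det ≠ 0) :
    ∃ (U V : GL n R) (a : n → R), A = U.val * Matrix.diagonal a * V.val := by
  have hinj : Function.Injective A.mulVecLin :=
    (injective_iff_map_eq_zero _).mpr fun v hv => Matrix.eq_zero_of_mulVec_eq_zero hA hv
  let e := LinearEquiv.ofInjective A.mulVecLin hinj
  let columns := (Pi.basisFun R n).map e
  obtain ⟨b, a, b', hb'⟩ := Submodule.exists_smith_normal_form_of_rank_eq (Pi.basisFun R n)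
    e.finrank_eq.symm
  let := (Pi.basisFun R n).invertibleToMatrix b
  let := b'.invertibleToMatrix columns
  refine ⟨unitOfInvertible ((Pi.basisFun R n).toMatrix b),
    unitOfInvertible (b'.toMatrix columns), a, ?_⟩
  ext i j
  have hcolumn : (columns j : n → R) i = A i j := by
    simp [columns, e]
  have hsum : ∑ k, b'.toMatrix columns k j * (a k * b k i) = (columns j : n → R) i := by
    rw [← b'.sum_toMatrix_smul_self columns j]
    simp [hb', -Module.Basis.sum_toMatrix_smul_self]
  rw [← hcolumn, ← hsum, Matrix.mul_apply]
  refine Finset.sum_congr rfl fun k _ => ?_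
  rw [Matrix.mul_diagonal, val_unitOfInvertible, val_unitOfInvertible,
    Module.Basis.toMatrix_apply (Pi.basisFun R n), Pi.basisFun_repr]
  ring

variable [Field K] [Algebra R K] [IsFractionRing R K]

variable (R) in
lemma exists_eq_mul_diagonalGL_mul (A : GL n K) :
    ∃ U ∈ integralGL (algebraMap R K).range n, ∃ V ∈ integralGL (algebraMap R K).range n,
      ∃ D : n → Kˣ, A = U * diagonalGL D * V := by
  obtain ⟨c, hc⟩ := IsLocalization.exist_integer_multiples_of_finite (nonZeroDivisors R)
    fun ij : n × n => A.val ij.1 ij.2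
  choose B hB using fun i j => hc (i, j)
  have hBA : (Matrix.of B).map (algebraMap R K) = algebraMap R K c • A.val := by
    ext i j
    simp [hB, Algebra.smul_def]
  have hc0 : algebraMap R K c ≠ 0 := (IsLocalization.map_units K c).ne_zero
  have hdet : (Matrix.of B).det ≠ 0 := by
    intro h
    have hK := congrArg Matrix.det hBA
    rw [← RingHom.mapMatrix_apply, ← RingHom.map_det, h, map_zero, Matrix.det_smul] at hK
    exact mul_ne_zero (pow_ne_zero _ hc0) A.det.ne_zero hK.symm
  obtain ⟨U, V, a, hUV⟩ := exists_eq_mul_diagonal_mul hdet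
  let U' := Matrix.GeneralLinearGroup.map (algebraMap R K) U
  let V' := Matrix.GeneralLinearGroup.map (algebraMap R K) V
  let δ : n → K := fun i => (algebraMap R K c)⁻¹ * algebraMap R K (a i)
  have hA : A.val = U'.val * Matrix.diagonal δ * V'.val := by
    have hscale : A.val = (algebraMap R K c)⁻¹ • (Matrix.of B).map (algebraMap R K) := by
      rw [hBA, smul_smul, inv_mul_cancel₀ hc0, one_smul]
    have hdiag : Matrix.diagonal δ =
        (algebraMap R K c)⁻¹ • (Matrix.diagonal a).map (algebraMap R K) := by
      rw [Matrix.diagonal_map (map_zero _), ← Matrix.diagonal_smul]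
      rfl
    rw [hscale, hUV, hdiag, Matrix.map_mul, Matrix.map_mul, Matrix.mul_smul, Matrix.smul_mul]
    rfl
  have hδ : IsUnit (Matrix.diagonal δ) := by
    have : Matrix.diagonal δ = (U'⁻¹ * A * V'⁻¹).val := by
      simp [hA, mul_assoc]
    exact this ▸ Units.isUnit _
  choose D hD using Pi.isUnit_iff.mp (Matrix.isUnit_diagonal.mp hδ)
  refine ⟨U', map_mem_integralGL _ U, V', map_mem_integralGL _ V, D, Units.ext ?_⟩
  simp only [hA, Units.val_mul, coe_diagonalGL, hD]

end SmithNormalForm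

section Approximation

open IsDedekindDomain
open scoped MatrixGroups

variable {n R K : Type*} [Fintype n] [DecidableEq n]
variable [CommRing R] [IsDedekindDomain R]
variable [Field K] [Algebra R K] [IsFractionRing R K]

lemma range_algebraMap_le_integer (v : HeightOneSpectrum R) :
    (algebraMap R K).range ≤ (v.valuation K).integer := by
  rintro _ ⟨r, rfl⟩
  exact v.valuation_le_one r

lemma dvd_iff_forall_valuation_le {r s : R} (hr : r ≠ 0) :
    r ∣ s ↔ ∀ v : HeightOneSpectrum R,
      v.valuation K (algebraMap R K s) ≤ v.valuation K (algebraMap R K r) := by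
  have hr' : algebraMap R K r ≠ 0 := by simpa using hr
  constructor
  · rintro ⟨t, rfl⟩ v
    rw [map_mul, map_mul]
    exact mul_le_of_le_one_right' (v.valuation_le_one t)
  · intro h
    obtain ⟨t, ht⟩ := HeightOneSpectrum.mem_integers_of_valuation_le_one K
      (algebraMap R K s / algebraMap R K r) fun v => by
        rw [map_div₀]
        exact div_le_one_of_le₀ (h v) zero_le
    refine ⟨t, IsFractionRing.injective R K ?_⟩
    rw [map_mul, ht, mul_div_cancel₀ _ hr']

lemma isIntegralModel_iff_forall_integer {ι : Type*} {M : ι → MvPolynomial ι K} :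
    IsIntegralModel (algebraMap R K).range M ↔
      ∀ v : HeightOneSpectrum R, IsIntegralModel (v.valuation K).integer M :=
  ⟨fun h v a m => range_algebraMap_le_integer v (h a m), fun h a m =>
    HeightOneSpectrum.mem_integers_of_valuation_le_one K _ fun v => h v a m⟩

lemma diagonalGL_mem_integralGL_integer {Γ₀ : Type*} [LinearOrderedCommGroupWithZero Γ₀]
    {v : Valuation K Γ₀} {D : n → Kˣ} (hD : ∀ i, v (D i) = 1) :
    diagonalGL D ∈ integralGL v.integer n := by
  refine diagonalGL_mem_integralGL fun i => ?_
  obtain ⟨u, hu⟩ : IsUnit (⟨D i, (hD i).le⟩ : v.integer) :=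
    (Valuation.integer.integers v).isUnit_of_one' (hD i)
  exact ⟨u, congrArg v.integer.subtype hu⟩

variable [IsPrincipalIdealRing R]

lemma exists_unit_valuation_eq (v : HeightOneSpectrum R) (x : Kˣ) :
    ∃ y : Kˣ, v.valuation K y = v.valuation K x ∧ ∀ w ≠ v, w.valuation K (y : K) = 1 := by
  obtain ⟨p, hp⟩ := IsPrincipalIdealRing.principal v.asIdeal
  have hp0 : p ≠ 0 := by
    rintro rfl
    exact v.ne_bot (hp.trans Ideal.span_singleton_zero)
  have hvp : v.valuation K (algebraMap R K p) = WithZero.exp (-1) := by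
    rw [v.valuation_of_algebraMap, v.intValuation_singleton hp0 hp]
  have hwp (w : HeightOneSpectrum R) (hw : w ≠ v) : w.valuation K (algebraMap R K p) = 1 := by
    refine w.valuation_eq_one_iff_notMem.mpr fun hmem => hw (HeightOneSpectrum.ext ?_)
    have hle : v.asIdeal ≤ w.asIdeal := hp ▸ (Ideal.span_singleton_le_iff_mem _).mpr hmem
    exact (v.isMaximal.eq_of_le w.isPrime.ne_top hle).symm
  have hx : v.valuation K (x : K) ≠ 0 := (Valuation.ne_zero_iff _).mpr x.ne_zero
  refine ⟨Units.mk0 (algebraMap R K p) (by simpa using hp0) ^ (-WithZero.log (v.valuation K x)),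
    ?_, fun w hw => ?_⟩
  · rw [Units.val_zpow_eq_zpow_val, Units.val_mk0, map_zpow₀, hvp, ← WithZero.exp_zsmul,
      smul_neg, neg_smul, neg_neg, smul_eq_mul, mul_one, WithZero.exp_log hx]
  · rw [Units.val_zpow_eq_zpow_val, Units.val_mk0, map_zpow₀, hwp w hw, one_zpow]

lemma exists_GL_mem_integralGL (v : HeightOneSpectrum R) (A : GL n K) :
    ∃ B : GL n K, A⁻¹ * B ∈ integralGL (v.valuation K).integer n ∧
      ∀ w ≠ v, B ∈ integralGL (w.valuation K).integer n := by
  obtain ⟨U, hU, V, hV, D, rfl⟩ := exists_eq_mul_diagonalGL_mul R A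
  choose E hvE hwE using fun i => exists_unit_valuation_eq v (D i)
  have hle (w : HeightOneSpectrum R) :=
    integralGL_mono (range_algebraMap_le_integer (K := K) w) n
  refine ⟨U * diagonalGL E, ?_, fun w hw => mul_mem (hle w hU) ?_⟩
  · have hquot : (U * diagonalGL D * V)⁻¹ * (U * diagonalGL E) = V⁻¹ * diagonalGL (D⁻¹ * E) := by
      rw [map_mul, map_inv]
      group
    rw [hquot]
    refine mul_mem (inv_mem (hle v hV)) (diagonalGL_mem_integralGL_integer fun i => ?_)
    simp [hvE]
  · exact diagonalGL_mem_integralGL_integer fun i => hwE i w hw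

end Approximation

section MinimalModels

open IsDedekindDomain
open scoped MatrixGroups

variable {R K : Type*} [CommRing R]

/-- The resultants of the integral models equivalent to the pair `M` of binary forms of degree
`d`; they generate the ideal `Res_R([φ])` when `M` is a model of `φ`. -/
def integralResultants (R : Type*) {K : Type*} [CommRing R] [Field K] [Algebra R K] (d : ℕ)
    (M : Fin 2 → MvPolynomial (Fin 2) K) : Set R :=
  {r | ∃ (l : Kˣ) (A : GL (Fin 2) K),
    IsIntegralModel (algebraMap R K).range (conjModel (l : K) A M) ∧
      algebraMap R K r = formResultant d (conjModel (l : K) A M)}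

variable [Field K] [Algebra R K]

lemma integralResultants_conjModel (d : ℕ) (l : Kˣ) (A : GL (Fin 2) K)
    (M : Fin 2 → MvPolynomial (Fin 2) K) :
    integralResultants R d (conjModel (l : K) A M) = integralResultants R d M := by
  have hsubset (l : Kˣ) (A : GL (Fin 2) K) (M : Fin 2 → MvPolynomial (Fin 2) K) :
      integralResultants R d (conjModel (l : K) A M) ⊆ integralResultants R d M := by
    rintro r ⟨m, B, h⟩
    rw [conjModel_conjModel, ← Units.val_mul, ← Units.val_mul] at h
    exact ⟨m * l, A * B, h⟩
  refine (hsubset l A M).antisymm ?_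
  have h := hsubset l⁻¹ A⁻¹ (conjModel (l : K) A M)
  rwa [conjModel_conjModel, ← Units.val_mul, ← Units.val_mul, inv_mul_cancel, mul_inv_cancel,
    Units.val_one, Units.val_one, conjModel_one, MvPolynomial.C_1,
    funext fun a => one_mul (M a)] at h

variable [IsFractionRing R K]

variable (R) in
lemma integralResultants_nonempty (d : ℕ) (M : Fin 2 → MvPolynomial (Fin 2) K) :
    (integralResultants R d M).Nonempty := by
  obtain ⟨l, hl⟩ := exists_isIntegralModel_conjModel R M
  obtain ⟨r, hr⟩ := hl.formResultant_mem d
  exact ⟨r, l, 1, hl, hr⟩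

variable [IsDomain R] [IsPrincipalIdealRing R] {d : ℕ} {M : Fin 2 → MvPolynomial (Fin 2) K}

lemma exists_isIntegralModel_valuation_formResultant_eq (v : HeightOneSpectrum R)
    (hM : ∀ a, (M a).IsHomogeneous d) (hMR : IsIntegralModel (algebraMap R K).range M)
    (x : Kˣ) (X : GL (Fin 2) K)
    (hxX : IsIntegralModel (algebraMap R K).range (conjModel (x : K) X M)) :
    ∃ (y : Kˣ) (Y : GL (Fin 2) K),
      IsIntegralModel (algebraMap R K).range (conjModel (y : K) Y M) ∧
      v.valuation K (formResultant d (conjModel (y : K) Y M)) =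
        v.valuation K (formResultant d (conjModel (x : K) X M)) ∧
      ∀ w ≠ v, w.valuation K (formResultant d (conjModel (y : K) Y M)) =
        w.valuation K (formResultant d M) := by
  obtain ⟨y, hvy, hwy⟩ := exists_unit_valuation_eq v x
  obtain ⟨Y, hvY, hwY⟩ := exists_GL_mem_integralGL v X
  have hxy : v.valuation K ((y : K) * (x : K)⁻¹) = 1 := by
    rw [map_mul, map_inv₀, hvy, mul_inv_cancel₀ ((Valuation.ne_zero_iff _).mpr x.ne_zero)]
  have hconj : conjModel (y : K) Y M =
      conjModel ((y : K) * (x : K)⁻¹) (X⁻¹ * Y : GL (Fin 2) K) (conjModel (x : K) X M) := by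
    rw [conjModel_conjModel, inv_mul_cancel_right₀ x.ne_zero, ← Units.val_mul,
      mul_inv_cancel_left]
  refine ⟨y, Y, isIntegralModel_iff_forall_integer.mpr fun w => ?_, ?_, fun w hw =>
    valuation_formResultant_conjModel _ (hwy w hw) (hwY w hw) hM⟩
  · by_cases hw : w = v
    · subst hw
      rw [hconj]
      exact (isIntegralModel_iff_forall_integer.mp hxX w).conjModel hxy.le hvY
    · exact (isIntegralModel_iff_forall_integer.mp hMR w).conjModel (hwy w hw).le (hwY w hw)
  · rw [hconj]
    exact valuation_formResultant_conjModel _ hxy hvY (isHomogeneous_conjModel _ _ hM)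

lemma exists_mem_integralResultants_valuation_eq (v : HeightOneSpectrum R)
    (hM : ∀ a, (M a).IsHomogeneous d) {r s : R} (hr : r ∈ integralResultants R d M)
    (hs : s ∈ integralResultants R d M) :
    ∃ t ∈ integralResultants R d M,
      v.valuation K (algebraMap R K t) = v.valuation K (algebraMap R K s) ∧
      ∀ w ≠ v, w.valuation K (algebraMap R K t) = w.valuation K (algebraMap R K r) := by
  obtain ⟨l, A, hlA, hrA⟩ := hr
  rw [← integralResultants_conjModel d l A M] at hs ⊢
  obtain ⟨x, X, hxX, hsX⟩ := hs
  obtain ⟨y, Y, hyY, hvY, hwY⟩ := exists_isIntegralModel_valuation_formResultant_eq v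
    (isHomogeneous_conjModel _ _ hM) hlA x X hxX
  obtain ⟨t, ht⟩ := hyY.formResultant_mem d
  refine ⟨t, ⟨y, Y, hyY, ht⟩, ?_, fun w hw => ?_⟩
  · rw [ht, hsX, hvY]
  · rw [ht, hrA, hwY w hw]

lemma exists_mem_integralResultants_dvdNotUnit (hM : ∀ a, (M a).IsHomogeneous d) {r s : R}
    (hr : r ∈ integralResultants R d M) (hs : s ∈ integralResultants R d M) (hrs : ¬ r ∣ s) :
    ∃ t ∈ integralResultants R d M, DvdNotUnit t r := by
  obtain rfl | hr0 := eq_or_ne r 0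
  · exact ⟨s, hs, dvdNotUnit_of_dvd_of_not_dvd (dvd_zero s) hrs⟩
  obtain ⟨v, hv⟩ : ∃ v : HeightOneSpectrum R,
      v.valuation K (algebraMap R K r) < v.valuation K (algebraMap R K s) := by
    contrapose! hrs
    exact (dvd_iff_forall_valuation_le hr0).mpr hrs
  obtain ⟨t, ht, hvt, hwt⟩ := exists_mem_integralResultants_valuation_eq v hM hr hs
  rw [← hvt] at hv
  have ht0 : t ≠ 0 := by
    rintro rfl
    rw [map_zero, map_zero] at hv
    exact not_lt_zero hv
  have htr : t ∣ r := by
    refine (dvd_iff_forall_valuation_le (K := K) ht0).mpr fun w => ?_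
    obtain rfl | hw := eq_or_ne w v
    · exact hv.le
    · exact (hwt w hw).ge
  exact ⟨t, ht, dvdNotUnit_of_dvd_of_not_dvd htr fun hrt =>
    hv.not_ge ((dvd_iff_forall_valuation_le hr0).mp hrt v)⟩

variable (R) in
lemma exists_mem_integralResultants_forall_dvd (hM : ∀ a, (M a).IsHomogeneous d) :
    ∃ r ∈ integralResultants R d M, ∀ s ∈ integralResultants R d M, r ∣ s := by
  obtain ⟨r, hr, hmin⟩ := (wellFounded_dvdNotUnit (α := R)).has_min _
    (integralResultants_nonempty R d M)
  refine ⟨r, hr, fun s hs => ?_⟩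
  by_contra hrs
  obtain ⟨t, ht, htr⟩ := exists_mem_integralResultants_dvdNotUnit hM hr hs hrs
  exact hmin t ht htr

end MinimalModels

section CoefficientSequences

open MvPolynomial
open scoped MatrixGroups

variable {R K : Type*} [CommRing R]

lemma isHomogeneous_toForm [CommRing K] (d : ℕ) (f : ℕ → K) : (toForm d f).IsHomogeneous d := by
  refine IsHomogeneous.sum _ _ _ fun i hi => ?_
  have h := ((isHomogeneous_X_pow (R := K) (0 : Fin 2) i).C_mul (f i)).mul
    (isHomogeneous_X_pow (1 : Fin 2) (d - i))
  rwa [Nat.add_sub_of_le (Finset.mem_range_succ_iff.mp hi)] at h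

/-- The pair of binary forms of degree `d` with coefficient sequences `f` and `g`. -/
def formPair [CommRing K] (d : ℕ) (f g : ℕ → K) : Fin 2 → MvPolynomial (Fin 2) K :=
  ![toForm d f, toForm d g]

lemma isHomogeneous_formPair [CommRing K] (d : ℕ) (f g : ℕ → K) (a : Fin 2) :
    (formPair d f g a).IsHomogeneous d := by
  fin_cases a
  · exact isHomogeneous_toForm d f
  · exact isHomogeneous_toForm d g

lemma coeffVec_conjModel_formPair_zero [CommRing K] (d : ℕ) (f g : ℕ → K) (l : K)
    (A : Matrix (Fin 2) (Fin 2) K) :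
    coeffVec d (conjModel l A (formPair d f g) 0) = fun i => l * FA d f g A i := by
  funext i
  simp only [coeffVec, FA, ← coeff_C_mul, conjModel, formPair, Fin.sum_univ_two,
    Matrix.adjugate_fin_two, substMat_eq_linearSubst]
  congr 1
  simp only [Matrix.of_apply, Matrix.cons_val', Matrix.cons_val_zero, Matrix.cons_val_one,
    Matrix.cons_val_fin_one, C_mul, C_neg]
  ring

lemma coeffVec_conjModel_formPair_one [CommRing K] (d : ℕ) (f g : ℕ → K) (l : K)
    (A : Matrix (Fin 2) (Fin 2) K) :
    coeffVec d (conjModel l A (formPair d f g) 1) = fun i => l * GA d f g A i := by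
  funext i
  simp only [coeffVec, GA, ← coeff_C_mul, conjModel, formPair, Fin.sum_univ_two,
    Matrix.adjugate_fin_two, substMat_eq_linearSubst]
  congr 1
  simp only [Matrix.of_apply, Matrix.cons_val', Matrix.cons_val_zero, Matrix.cons_val_one,
    Matrix.cons_val_fin_one, C_mul, C_neg]
  ring

lemma formResultant_conjModel_formPair [CommRing K] (d : ℕ) (f g : ℕ → K) (l : K)
    (A : Matrix (Fin 2) (Fin 2) K) :
    formResultant d (conjModel l A (formPair d f g)) =
      sylRes d d (fun i => l * FA d f g A i) (fun i => l * GA d f g A i) := by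
  rw [formResultant, coeffVec_conjModel_formPair_zero, coeffVec_conjModel_formPair_one]

lemma isIntegralModel_conjModel_formPair_iff [CommRing K] [Algebra R K] (d : ℕ) (f g : ℕ → K)
    (l : K) (A : Matrix (Fin 2) (Fin 2) K) :
    IsIntegralModel (algebraMap R K).range (conjModel l A (formPair d f g)) ↔
      (∀ i, ∃ a : R, algebraMap R K a = l * FA d f g A i) ∧
        ∀ i, ∃ b : R, algebraMap R K b = l * GA d f g A i := by
  rw [isIntegralModel_iff_coeffVec (isHomogeneous_conjModel l A (isHomogeneous_formPair d f g)),
    Fin.forall_fin_two, coeffVec_conjModel_formPair_zero, coeffVec_conjModel_formPair_one]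
  rfl

variable [Field K] [Algebra R K]

lemma mem_integralResultants_formPair_iff {d : ℕ} {f g : ℕ → K} {r : R} :
    r ∈ integralResultants R d (formPair d f g) ↔
      ∃ (l : K) (A : Matrix (Fin 2) (Fin 2) K), l ≠ 0 ∧ A.det ≠ 0 ∧
        (∀ i, ∃ a : R, algebraMap R K a = l * FA d f g A i) ∧
        (∀ i, ∃ b : R, algebraMap R K b = l * GA d f g A i) ∧
        algebraMap R K r =
          sylRes d d (fun i => l * FA d f g A i) (fun i => l * GA d f g A i) := by
  simp only [integralResultants, Set.mem_ofPred_eq, isIntegralModel_conjModel_formPair_iff,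
    formResultant_conjModel_formPair, and_assoc]
  constructor
  · rintro ⟨l, A, h⟩
    exact ⟨l, A, l.ne_zero, A.det.ne_zero, h⟩
  · rintro ⟨l, A, hl, hA, h⟩
    exact ⟨Units.mk0 l hl, Matrix.GeneralLinearGroup.mkOfDetNeZero A hA, h⟩

variable (R) in
lemma resIdeal_eq_span_integralResultants (d : ℕ) (f g : ℕ → K) :
    ResIdeal R d f g = Ideal.span (integralResultants R d (formPair d f g)) :=
  congrArg Ideal.span (Set.ext fun _ => mem_integralResultants_formPair_iff.symm)

end CoefficientSequences

theorem statement5_general {R K : Type*} [CommRing R] [IsDomain R] [IsPrincipalIdealRing R]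
    [Field K] [Algebra R K] [IsFractionRing R K] (d : ℕ) (f g : ℕ → K) :
    ∃ (l : K) (A : Matrix (Fin 2) (Fin 2) K), l ≠ 0 ∧ A.det ≠ 0 ∧
      (∀ i, ∃ a : R, algebraMap R K a = l * FA d f g A i) ∧
      (∀ i, ∃ b : R, algebraMap R K b = l * GA d f g A i) ∧
      (∃ r : R,
        algebraMap R K r =
          sylRes d d (fun i => l * FA d f g A i) (fun i => l * GA d f g A i) ∧
        ResIdeal R d f g = Ideal.span {r}) := by
  obtain ⟨r, hr, hdvd⟩ := exists_mem_integralResultants_forall_dvd R (isHomogeneous_formPair d f g)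
  have hspan : ResIdeal R d f g = Ideal.span {r} := by
    rw [resIdeal_eq_span_integralResultants]
    refine le_antisymm (Ideal.span_le.mpr fun s hs => Ideal.mem_span_singleton.mpr (hdvd s hs)) ?_
    exact Ideal.span_mono (Set.singleton_subset_iff.mpr hr)
  obtain ⟨l, A, hl, hA, hF, hG, hres⟩ := mem_integralResultants_formPair_iff.mp hr
  exact ⟨l, A, hl, hA, hF, hG, r, hres, hspan⟩

/-- Over a PID `R` with fraction field `K`, every rational map of degree
`d ≥ 2` given by a model `[F,G]` over `K` admits an `R`-minimal model: there is
`(λ,A) ∈ K^× × GL₂(K)` such that `[λF_A, λG_A]` has coefficients in `R` and its resultant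
generates the ideal `Res_R([φ])`. -/
theorem statement5 {R K : Type*} [CommRing R] [IsDomain R] [IsPrincipalIdealRing R]
    [Field K] [Algebra R K] [IsFractionRing R K]
    (d : ℕ) (hd : 2 ≤ d) (f g : ℕ → K)
    (hf : ∀ i, d < i → f i = 0) (hg : ∀ i, d < i → g i = 0)
    (hres : sylRes d d f g ≠ 0) :
    ∃ (l : K) (A : Matrix (Fin 2) (Fin 2) K), l ≠ 0 ∧ A.det ≠ 0 ∧
      (∀ i, ∃ a : R, algebraMap R K a = l * FA d f g A i) ∧
      (∀ i, ∃ b : R, algebraMap R K b = l * GA d f g A i) ∧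
      (∃ r : R,
        algebraMap R K r =
          sylRes d d (fun i => l * FA d f g A i) (fun i => l * GA d f g A i) ∧
        ResIdeal R d f g = Ideal.span {r}) :=
  statement5_general d f g

end
end

section
/- Let φ(z) = (7z³ − 41z² − 216z + 180)/(2z³ − z² − 21z + 90), a degree-3 rational map on P¹ over ℚ. Then the model [F,G] with F = 7X³ − 41X²Y − 216XY² + 180Y³ and G = 2X³ − X²Y − 21XY² + 90Y³ is a ℤ-minimal model of [φ], and the first ten points of the forward orbit of 0 under φ are the integers 0, 2, −6, 6, −3, 3, −9, 5, −5, 8; in particular the orbit of 0 contains at least 10 integers. -/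
noncomputable section

/-!
The pair `(F, G)` of binary cubics has a symmetric `3 × 3` Bézout matrix `B`, whose determinant is
the resultant. Under `(λ, A)` it becomes `λ² det(A)² Mᵀ B M`, where `M` is the symmetric square of
`A`. Since `det M = det(A)³`, the resultant is multiplied by `u⁶`, where `u = λ det(A)²`. Since `M`
preserves the discriminant form up to `det(A)²`, pairing `B` with that form gives an invariant
`f₂g₁ - f₁g₂ + 3(f₀g₃ - f₃g₀)` of smaller weight: it is multiplied by `u²` only. If it is squarefree
and the new model is integral, then `u` must be integral, so the resultant can only be multiplied by
`u⁶` with `u` integral, and the given model is minimal. For the cubics of the theorem the invariant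
is `-165 = -3 · 5 · 11`.
-/

section BinaryForms

variable {R : Type*} [CommRing R]

theorem sylRes_map {S : Type*} [CommRing S] (φ : R →+* S) (m n : ℕ) (p q : ℕ → R) :
    sylRes m n (fun i => φ (p i)) (fun i => φ (q i)) = φ (sylRes m n p q) := by
  rw [sylRes, sylRes, RingHom.map_det]
  congr 1
  ext i j
  simp only [Matrix.of_apply, RingHom.mapMatrix_apply, Matrix.map_apply, apply_ite φ, map_zero]

theorem sylRes_congr {m n : ℕ} {p p' q q' : ℕ → R} (hp : ∀ i ≤ m, p i = p' i)
    (hq : ∀ i ≤ n, q i = q' i) : sylRes m n p q = sylRes m n p' q' := by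
  simp only [sylRes, hp _ (Nat.sub_le _ _), hq _ (Nat.sub_le _ _)]

theorem toForm_eq_sum_monomial (d : ℕ) (f : ℕ → R) :
    toForm d f = ∑ k ∈ Finset.range (d + 1),
      MvPolynomial.monomial (Finsupp.single 0 k + Finsupp.single 1 (d - k)) (f k) := by
  refine Finset.sum_congr rfl fun k _ => ?_
  rw [MvPolynomial.X_pow_eq_monomial, MvPolynomial.X_pow_eq_monomial,
    MvPolynomial.C_mul_monomial, MvPolynomial.monomial_mul, mul_one, mul_one]

theorem coeffVec_toForm (d : ℕ) (f : ℕ → R) (i : ℕ) :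
    coeffVec d (toForm d f) i = if i ≤ d then f i else 0 := by
  have exponent_inj (k : ℕ) :
      (Finsupp.single (0 : Fin 2) k + Finsupp.single 1 (d - k) =
        Finsupp.single 0 i + Finsupp.single 1 (d - i)) ↔ k = i :=
    ⟨fun h => by simpa using DFunLike.congr_fun h (0 : Fin 2), fun h => h ▸ rfl⟩
  simp only [coeffVec, toForm_eq_sum_monomial, MvPolynomial.coeff_sum,
    MvPolynomial.coeff_monomial, exponent_inj, Finset.sum_ite_eq', Finset.mem_range,
    Nat.lt_succ_iff]

theorem substMat_one (P : MvPolynomial (Fin 2) R) : substMat 1 P = P := by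
  have linearForms_one : (fun k : Fin 2 =>
      MvPolynomial.C ((1 : Matrix (Fin 2) (Fin 2) R) k 0) * MvPolynomial.X 0 +
        MvPolynomial.C ((1 : Matrix (Fin 2) (Fin 2) R) k 1) * MvPolynomial.X 1) =
      MvPolynomial.X := by
    funext k
    match k with
    | 0 => simp
    | 1 => simp
  rw [substMat, linearForms_one, MvPolynomial.eval₂_eta]

theorem FA_apply (d : ℕ) (f g : ℕ → R) (A : Matrix (Fin 2) (Fin 2) R) (i : ℕ) :
    FA d f g A i = A 1 1 * coeffVec d (substMat A (toForm d f)) i -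
      A 0 1 * coeffVec d (substMat A (toForm d g)) i := by
  simp only [FA, coeffVec, MvPolynomial.coeff_sub, MvPolynomial.coeff_C_mul]

theorem GA_apply (d : ℕ) (f g : ℕ → R) (A : Matrix (Fin 2) (Fin 2) R) (i : ℕ) :
    GA d f g A i = -A 1 0 * coeffVec d (substMat A (toForm d f)) i +
      A 0 0 * coeffVec d (substMat A (toForm d g)) i := by
  simp only [GA, coeffVec, ← map_neg MvPolynomial.C, MvPolynomial.coeff_add,
    MvPolynomial.coeff_C_mul]

theorem FA_one (d : ℕ) (f g : ℕ → R) (i : ℕ) :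
    FA d f g 1 i = if i ≤ d then f i else 0 := by
  simp [FA_apply, substMat_one, coeffVec_toForm]

theorem GA_one (d : ℕ) (f g : ℕ → R) (i : ℕ) :
    GA d f g 1 i = if i ≤ d then g i else 0 := by
  simp [GA_apply, substMat_one, coeffVec_toForm]

end BinaryForms

section BinaryCubics

open scoped Matrix

variable {R : Type*} [CommRing R]

/-- Coefficients of the binary cubic `F(αX + βY, γX + δY)` for `A = [[α, β], [γ, δ]]`, where `f i`
is the coefficient of `X^i Y^(3-i)` in `F`. -/
def cubicSubst (A : Matrix (Fin 2) (Fin 2) R) (f : ℕ → R) : ℕ → R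
  | 0 => f 3 * A 0 1 ^ 3 + f 2 * A 0 1 ^ 2 * A 1 1 + f 1 * A 0 1 * A 1 1 ^ 2 + f 0 * A 1 1 ^ 3
  | 1 => f 3 * (3 * A 0 0 * A 0 1 ^ 2) + f 2 * (2 * A 0 0 * A 0 1 * A 1 1 + A 0 1 ^ 2 * A 1 0) +
      f 1 * (A 0 0 * A 1 1 ^ 2 + 2 * A 0 1 * A 1 0 * A 1 1) + f 0 * (3 * A 1 0 * A 1 1 ^ 2)
  | 2 => f 3 * (3 * A 0 0 ^ 2 * A 0 1) + f 2 * (A 0 0 ^ 2 * A 1 1 + 2 * A 0 0 * A 0 1 * A 1 0) +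
      f 1 * (2 * A 0 0 * A 1 0 * A 1 1 + A 0 1 * A 1 0 ^ 2) + f 0 * (3 * A 1 0 ^ 2 * A 1 1)
  | 3 => f 3 * A 0 0 ^ 3 + f 2 * A 0 0 ^ 2 * A 1 0 + f 1 * A 0 0 * A 1 0 ^ 2 + f 0 * A 1 0 ^ 3
  | _ => 0

theorem substMat_toForm_three (A : Matrix (Fin 2) (Fin 2) R) (f : ℕ → R) :
    substMat A (toForm 3 f) = toForm 3 (cubicSubst A f) := by
  simp only [substMat, toForm, cubicSubst, Finset.sum_range_succ, Finset.sum_range_zero, zero_add,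
    MvPolynomial.eval₂_add, MvPolynomial.eval₂_mul, MvPolynomial.eval₂_pow, MvPolynomial.eval₂_C,
    MvPolynomial.eval₂_X, map_add, map_mul, map_pow, map_ofNat]
  ring

theorem coeffVec_substMat_toForm_three (A : Matrix (Fin 2) (Fin 2) R) (f : ℕ → R) :
    coeffVec 3 (substMat A (toForm 3 f)) = cubicSubst A f := by
  ext i
  rw [substMat_toForm_three, coeffVec_toForm, ite_eq_left_iff]
  intro hi
  obtain ⟨k, rfl⟩ := Nat.exists_eq_add_of_le' (not_le.mp hi)
  rfl

/-- The Bézout matrix of two binary cubics `F`, `G`: entry `(i, j)` is the coefficient of `x^i y^j`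
in `(F(x, 1) G(y, 1) - F(y, 1) G(x, 1)) / (y - x)`. -/
def bezoutMatrix (f g : ℕ → R) : Matrix (Fin 3) (Fin 3) R :=
  !![f 0 * g 1 - f 1 * g 0, f 0 * g 2 - f 2 * g 0, f 0 * g 3 - f 3 * g 0;
     f 0 * g 2 - f 2 * g 0, f 0 * g 3 - f 3 * g 0 + (f 1 * g 2 - f 2 * g 1), f 1 * g 3 - f 3 * g 1;
     f 0 * g 3 - f 3 * g 0, f 1 * g 3 - f 3 * g 1, f 2 * g 3 - f 3 * g 2]

theorem sylRes_three_eq_det_bezoutMatrix (f g : ℕ → R) :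
    sylRes 3 3 f g = (bezoutMatrix f g).det := by
  have sylvester : sylRes 3 3 f g = Matrix.det
      !![f 3, f 2, f 1, f 0, 0, 0; 0, f 3, f 2, f 1, f 0, 0; 0, 0, f 3, f 2, f 1, f 0;
         g 3, g 2, g 1, g 0, 0, 0; 0, g 3, g 2, g 1, g 0, 0; 0, 0, g 3, g 2, g 1, g 0] := by
    rw [sylRes]
    congr 1
    ext i j
    fin_cases i <;> fin_cases j <;> rfl
  rw [sylvester, bezoutMatrix, Matrix.det_fin_three]
  simp [Matrix.det_succ_row_zero, Fin.sum_univ_succ, Fin.succAbove]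
  ring

theorem bezoutMatrix_linear_comb (f g : ℕ → R) (a b c e : R) :
    bezoutMatrix (fun i => a * f i + b * g i) (fun i => c * f i + e * g i) =
      (a * e - b * c) • bezoutMatrix f g := by
  ext i j
  fin_cases i <;> fin_cases j <;>
    simp only [bezoutMatrix, Matrix.smul_apply, smul_eq_mul, Fin.reduceFinMk, Fin.isValue,
      Matrix.of_apply, Matrix.cons_val', Matrix.cons_val, Matrix.cons_val_fin_one, Fin.zero_eta,
      Fin.mk_one] <;>
    ring

/-- The symmetric square of `A = [[α, β], [γ, δ]]`: its rows are the coefficients of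
`(γX + δY)²`, `(αX + βY)(γX + δY)`, `(αX + βY)²` in the basis `Y², XY, X²`. -/
def symSquare (A : Matrix (Fin 2) (Fin 2) R) : Matrix (Fin 3) (Fin 3) R :=
  !![A 1 1 ^ 2, 2 * A 1 0 * A 1 1, A 1 0 ^ 2;
     A 0 1 * A 1 1, A 0 0 * A 1 1 + A 0 1 * A 1 0, A 0 0 * A 1 0;
     A 0 1 ^ 2, 2 * A 0 0 * A 0 1, A 0 0 ^ 2]

theorem det_symSquare (A : Matrix (Fin 2) (Fin 2) R) : (symSquare A).det = A.det ^ 3 := by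
  simp only [symSquare, Matrix.det_fin_three, Matrix.det_fin_two, Matrix.of_apply,
    Matrix.cons_val', Matrix.cons_val, Matrix.cons_val_fin_one]
  ring

theorem bezoutMatrix_cubicSubst (A : Matrix (Fin 2) (Fin 2) R) (f g : ℕ → R) :
    bezoutMatrix (cubicSubst A f) (cubicSubst A g) =
      A.det • ((symSquare A)ᵀ * bezoutMatrix f g * symSquare A) := by
  ext i j
  fin_cases i <;> fin_cases j <;>
    simp only [bezoutMatrix, cubicSubst, symSquare, Matrix.det_fin_two, Matrix.smul_apply,
      Matrix.mul_apply, Matrix.transpose_apply, smul_eq_mul, Fin.sum_univ_three, Fin.reduceFinMk,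
      Fin.isValue, Matrix.of_apply, Matrix.cons_val', Matrix.cons_val, Matrix.cons_val_fin_one,
      Fin.zero_eta, Fin.mk_one] <;>
    ring

theorem bezoutMatrix_FA_GA (f g : ℕ → R) (l : R) (A : Matrix (Fin 2) (Fin 2) R) :
    bezoutMatrix (fun i => l * FA 3 f g A i) (fun i => l * GA 3 f g A i) =
      (l * A.det) ^ 2 • ((symSquare A)ᵀ * bezoutMatrix f g * symSquare A) := by
  have hF : (fun i => l * FA 3 f g A i) =
      fun i => l * A 1 1 * cubicSubst A f i + -(l * A 0 1) * cubicSubst A g i := by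
    ext i
    rw [FA_apply, coeffVec_substMat_toForm_three, coeffVec_substMat_toForm_three]
    ring
  have hG : (fun i => l * GA 3 f g A i) =
      fun i => -(l * A 1 0) * cubicSubst A f i + l * A 0 0 * cubicSubst A g i := by
    ext i
    rw [GA_apply, coeffVec_substMat_toForm_three, coeffVec_substMat_toForm_three]
    ring
  rw [hF, hG, bezoutMatrix_linear_comb, bezoutMatrix_cubicSubst, smul_smul]
  congr 1
  rw [Matrix.det_fin_two]
  ring

theorem sylRes_FA_GA (f g : ℕ → R) (l : R) (A : Matrix (Fin 2) (Fin 2) R) :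
    sylRes 3 3 (fun i => l * FA 3 f g A i) (fun i => l * GA 3 f g A i) =
      (l * A.det ^ 2) ^ 6 * sylRes 3 3 f g := by
  rw [sylRes_three_eq_det_bezoutMatrix, sylRes_three_eq_det_bezoutMatrix, bezoutMatrix_FA_GA,
    Matrix.det_smul, Matrix.det_mul, Matrix.det_mul, Matrix.det_transpose, det_symSquare,
    Fintype.card_fin]
  ring

/-- The Gram matrix of the quadratic form `4ac - b²`, minus the discriminant of
`aY² + bXY + cX²`. -/
def discrGram : Matrix (Fin 3) (Fin 3) R :=
  !![0, 0, 2; 0, -1, 0; 2, 0, 0]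

theorem symSquare_mul_discrGram_mul_transpose (A : Matrix (Fin 2) (Fin 2) R) :
    symSquare A * discrGram * (symSquare A)ᵀ = A.det ^ 2 • discrGram := by
  ext i j
  fin_cases i <;> fin_cases j <;>
    simp only [symSquare, discrGram, Matrix.det_fin_two, Matrix.smul_apply, Matrix.mul_apply,
      Matrix.transpose_apply, smul_eq_mul, Fin.sum_univ_three, Fin.reduceFinMk, Fin.isValue,
      Matrix.of_apply, Matrix.cons_val', Matrix.cons_val, Matrix.cons_val_fin_one, Fin.zero_eta,
      Fin.mk_one] <;>
    ring

/-- The apolar pairing of two binary cubics, i.e. their third transvectant scaled so as to have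
integral coefficients. Its small weight under change of model is what bounds the resultant. -/
def apolarPairing (f g : ℕ → R) : R :=
  f 2 * g 1 - f 1 * g 2 + 3 * (f 0 * g 3 - f 3 * g 0)

theorem apolarPairing_eq_trace (f g : ℕ → R) :
    apolarPairing f g = (discrGram * bezoutMatrix f g).trace := by
  simp only [apolarPairing, discrGram, bezoutMatrix, Matrix.trace_fin_three, Matrix.mul_apply,
    Fin.sum_univ_three, Matrix.of_apply, Matrix.cons_val', Matrix.cons_val,
    Matrix.cons_val_fin_one]
  ring

theorem apolarPairing_FA_GA (f g : ℕ → R) (l : R) (A : Matrix (Fin 2) (Fin 2) R) :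
    apolarPairing (fun i => l * FA 3 f g A i) (fun i => l * GA 3 f g A i) =
      (l * A.det ^ 2) ^ 2 * apolarPairing f g := by
  have trace_congr (B : Matrix (Fin 3) (Fin 3) R) :
      (discrGram * ((symSquare A)ᵀ * B * symSquare A)).trace =
        A.det ^ 2 * (discrGram * B).trace := by
    rw [← Matrix.mul_assoc, Matrix.trace_mul_comm, ← Matrix.mul_assoc, ← Matrix.mul_assoc,
      symSquare_mul_discrGram_mul_transpose, Matrix.smul_mul, Matrix.trace_smul, smul_eq_mul]
  rw [apolarPairing_eq_trace, apolarPairing_eq_trace, bezoutMatrix_FA_GA, Matrix.mul_smul,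
    Matrix.trace_smul, trace_congr, smul_eq_mul]
  ring

theorem apolarPairing_map {S : Type*} [CommRing S] (φ : R →+* S) (f g : ℕ → R) :
    apolarPairing (fun i => φ (f i)) (fun i => φ (g i)) = φ (apolarPairing f g) := by
  simp only [apolarPairing, map_add, map_sub, map_mul, map_ofNat]

end BinaryCubics

section Minimality

variable {R K : Type*} [CommRing R] [Field K] [Algebra R K]

theorem sylRes_mem_ResIdeal (d : ℕ) (f g : ℕ → R) :
    sylRes d d f g ∈
      ResIdeal R d (fun i => algebraMap R K (f i)) (fun i => algebraMap R K (g i)) := by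
  refine Ideal.subset_span ⟨1, 1, one_ne_zero, by simp, fun i => ?_, fun i => ?_, ?_⟩
  · exact ⟨if i ≤ d then f i else 0, by rw [FA_one, one_mul, apply_ite (algebraMap R K), map_zero]⟩
  · exact ⟨if i ≤ d then g i else 0, by rw [GA_one, one_mul, apply_ite (algebraMap R K), map_zero]⟩
  · rw [← sylRes_map]
    apply sylRes_congr <;> intro i hi
    · rw [FA_one, if_pos hi, one_mul]
    · rw [GA_one, if_pos hi, one_mul]

variable [IsDomain R] [UniqueFactorizationMonoid R] [IsFractionRing R K]

theorem isInteger_of_sq_mul_squarefree {n : R} (hn : Squarefree n) {u : K}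
    (hu : IsLocalization.IsInteger R (u ^ 2 * algebraMap R K n)) :
    IsLocalization.IsInteger R u := by
  obtain ⟨m, hm⟩ := hu
  have clear_denominators :
      m * (IsFractionRing.den R u : R) ^ 2 = n * IsFractionRing.num R u ^ 2 := by
    apply IsFractionRing.injective R K
    have num_eq : u * algebraMap R K (IsFractionRing.den R u) =
        algebraMap R K (IsFractionRing.num R u) :=
      IsFractionRing.num_mul_den_eq_num_iff_eq.mpr rfl
    simp only [map_mul, map_pow]
    rw [hm, ← num_eq]
    ring
  have den_sq_dvd : (IsFractionRing.den R u : R) ^ 2 ∣ n :=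
    (IsFractionRing.num_den_reduced R u).symm.pow.dvd_of_dvd_mul_right
      ⟨m, by rw [← clear_denominators, mul_comm]⟩
  exact IsFractionRing.isInteger_of_isUnit_den (hn _ (by rwa [← sq]))

theorem ResIdeal_three_eq_span_of_squarefree_apolarPairing {f g : ℕ → R}
    (h : Squarefree (apolarPairing f g)) :
    ResIdeal R 3 (fun i => algebraMap R K (f i)) (fun i => algebraMap R K (g i)) =
      Ideal.span {sylRes 3 3 f g} := by
  apply le_antisymm
  · rw [ResIdeal, Ideal.span_le]
    rintro r ⟨l, A, -, -, hF, hG, hr⟩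
    choose a ha using hF
    choose b hb using hG
    obtain ⟨u, hu⟩ : IsLocalization.IsInteger R (l * A.det ^ 2) := by
      refine isInteger_of_sq_mul_squarefree h ⟨apolarPairing a b, ?_⟩
      rw [← apolarPairing_map, ← apolarPairing_map, ← apolarPairing_FA_GA]
      simp only [ha, hb]
    have r_eq : r = u ^ 6 * sylRes 3 3 f g := by
      apply IsFractionRing.injective R K
      rw [hr, sylRes_FA_GA, sylRes_map, ← hu, map_mul, map_pow]
    exact Ideal.mem_span_singleton.mpr (Dvd.intro_left _ r_eq.symm)
  · exact (Ideal.span_singleton_le_iff_mem _).mpr (sylRes_mem_ResIdeal 3 f g)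

end Minimality

section Example

/-- Coefficients of `7X³ - 41X²Y - 216XY² + 180Y³`, the numerator of `φ`. -/
def numCoeff : ℕ → ℤ
  | 0 => 180
  | 1 => -216
  | 2 => -41
  | 3 => 7
  | _ => 0

/-- Coefficients of `2X³ - X²Y - 21XY² + 90Y³`, the denominator of `φ`. -/
def denCoeff : ℕ → ℤ
  | 0 => 90
  | 1 => -21
  | 2 => -1
  | 3 => 2
  | _ => 0

theorem sylRes_numCoeff_denCoeff : sylRes 3 3 numCoeff denCoeff = 1333584000 := by
  rw [sylRes_three_eq_det_bezoutMatrix, Matrix.det_fin_three]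
  simp [bezoutMatrix, numCoeff, denCoeff]

theorem squarefree_apolarPairing_numCoeff_denCoeff :
    Squarefree (apolarPairing numCoeff denCoeff) := by
  have value : apolarPairing numCoeff denCoeff = -165 := rfl
  have squarefree_165 : Squarefree (3 * 5 * 11) :=
    Nat.squarefree_mul_iff.mpr ⟨by norm_num, Nat.squarefree_mul_iff.mpr ⟨by norm_num,
      Nat.prime_three.prime.squarefree, Nat.prime_five.prime.squarefree⟩,
      Nat.prime_eleven.prime.squarefree⟩
  rw [value]
  exact Int.squarefree_natAbs.mp squarefree_165

end Example

/-- For `φ(z) = (7z³ − 41z² − 216z + 180)/(2z³ − z² − 21z + 90)`, the model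
`[7X³ − 41X²Y − 216XY² + 180Y³, 2X³ − X²Y − 21XY² + 90Y³]` is a `ℤ`-minimal model of `[φ]`,
and the first ten points of the forward orbit of `0` under `φ` are
`0, 2, −6, 6, −3, 3, −9, 5, −5, 8` (with nonvanishing denominators along the way); in
particular the orbit of `0` contains at least `10` integers. -/
theorem statement19 (f g : ℕ → ℚ) (φ : ℚ → ℚ)
    (hfdef : f = fun i => if i = 0 then 180 else if i = 1 then -216 else
      if i = 2 then -41 else if i = 3 then 7 else 0)
    (hgdef : g = fun i => if i = 0 then 90 else if i = 1 then -21 else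
      if i = 2 then -1 else if i = 3 then 2 else 0)
    (hφ : φ = fun z => (7 * z ^ 3 - 41 * z ^ 2 - 216 * z + 180) /
      (2 * z ^ 3 - z ^ 2 - 21 * z + 90)) :
    -- the model is ℤ-minimal
    (∃ r : ℤ, (r : ℚ) = sylRes 3 3 f g ∧ ResIdeal ℤ 3 f g = Ideal.span {r}) ∧
    -- the denominator does not vanish along the initial orbit of 0
    (∀ z ∈ ({0, 2, -6, 6, -3, 3, -9, 5, -5} : Set ℚ),
      2 * z ^ 3 - z ^ 2 - 21 * z + 90 ≠ 0) ∧
    -- the first ten points of the orbit of 0 are integers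
    φ^[0] 0 = 0 ∧ φ^[1] 0 = 2 ∧ φ^[2] 0 = -6 ∧ φ^[3] 0 = 6 ∧ φ^[4] 0 = -3 ∧
    φ^[5] 0 = 3 ∧ φ^[6] 0 = -9 ∧ φ^[7] 0 = 5 ∧ φ^[8] 0 = -5 ∧ φ^[9] 0 = 8 := by
  have hf : f = fun i => algebraMap ℤ ℚ (numCoeff i) := by
    ext i
    rcases i with _ | _ | _ | _ | i <;> simp [hfdef, numCoeff]
  have hg : g = fun i => algebraMap ℤ ℚ (denCoeff i) := by
    ext i
    rcases i with _ | _ | _ | _ | i <;> simp [hgdef, denCoeff]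
  refine ⟨⟨1333584000, ?_, ?_⟩, ?_, ?_⟩
  · rw [hf, hg, sylRes_map, sylRes_numCoeff_denCoeff, eq_intCast]
  · rw [hf, hg, ← sylRes_numCoeff_denCoeff]
    exact ResIdeal_three_eq_span_of_squarefree_apolarPairing
      squarefree_apolarPairing_numCoeff_denCoeff
  · rintro z (rfl | rfl | rfl | rfl | rfl | rfl | rfl | rfl | rfl) <;> norm_num
  · norm_num [hφ, Function.iterate_succ_apply]

end
end
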